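/- Let W be a seven-dimensional complex vector space with a basis E₁,…,E₇ and dual basis E¹,…,E⁷, and write E^{ijk} := E^i∧E^j∧E^k. Let φ := E^{127}+E^{347}+E^{567}+E^{135}−E^{146}−E^{236}−E^{245} ∈ Λ³W*. Then (ρ(φ), l(φ), r(φ), m(φ)) = (7,4,2,2). -/

import Mathlib

open Module

section Machinery

variable {F : Type*} [Field F] {M : Type*} [AddCommGroup M] [Module F M]

/-- `X` is a decomposable `k`-vector, with factors taken from the ambient subspace `A`. -/
def Dec (A : Submodule F M) (k : ℕ) (X : ExteriorAlgebra F M) : Prop :=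
  ∃ v : Fin k → M, (∀ i, v i ∈ A) ∧ X = (List.ofFn fun i => ExteriorAlgebra.ι F (v i)).prod

/-- `X` is a sum of `l` decomposable `k`-vectors with factors from `A`. -/
def LenLE (A : Submodule F M) (k l : ℕ) (X : ExteriorAlgebra F M) : Prop :=
  ∃ Y : Fin l → ExteriorAlgebra F M, (∀ i, Dec A k (Y i)) ∧ X = ∑ i, Y i

/-- `X` has (irreducible) length `l` as a `k`-vector: it is a sum of `l` decomposable
`k`-vectors, and of no smaller number of them. -/
def HasLen (A : Submodule F M) (k l : ℕ) (X : ExteriorAlgebra F M) : Prop :=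
  LenLE A k l X ∧ ∀ j < l, ¬ LenLE A k j X

/-- The (irreducible) length of the `k`-vector `X`. -/
noncomputable def len (A : Submodule F M) (k : ℕ) (X : ExteriorAlgebra F M) : ℕ :=
  sInf {l | LenLE A k l X}

/-- `X` belongs to `Λ^k W`, regarded as a subspace of the exterior algebra. -/
def memPow (W : Submodule F M) (k : ℕ) (X : ExteriorAlgebra F M) : Prop :=
  X ∈ (W.map (ExteriorAlgebra.ι F)) ^ k

/-- The support `[X]` of the `k`-vector `X`: the intersection of all subspaces `W`
with `X ∈ Λ^k W`. -/
noncomputable def supp (k : ℕ) (X : ExteriorAlgebra F M) : Submodule F M :=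
  sInf {W | memPow W k X}

/-- The rank `ρ(X) = dim [X]` of the `k`-vector `X`. -/
noncomputable def rkInv (k : ℕ) (X : ExteriorAlgebra F M) : ℕ :=
  Module.finrank F (supp k X)

/-- `(v, W, X₁, X₂)` is an admissible splitting `X = X₁ ∧ v + X₂` of the `k`-vector `X`:
`v ∈ [X] ∖ {0}`, `W` is a complement of `span v` in `[X]`, `X₁ ∈ Λ^(k-1) W` and
`X₂ ∈ Λ^k W`. -/
def Split (k : ℕ) (X : ExteriorAlgebra F M) (v : M) (W : Submodule F M)
    (X₁ X₂ : ExteriorAlgebra F M) : Prop :=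
  v ∈ supp k X ∧ v ≠ 0 ∧
    W ⊔ Submodule.span F {v} = supp k X ∧ W ⊓ Submodule.span F {v} = ⊥ ∧
    memPow W (k - 1) X₁ ∧ memPow W k X₂ ∧
    X = X₁ * ExteriorAlgebra.ι F v + X₂

/-- The invariant `m(X) = min { l(X₁) }` over all admissible splittings of `X`. -/
noncomputable def mInv (A : Submodule F M) (k : ℕ) (X : ExteriorAlgebra F M) : ℕ :=
  sInf {l | ∃ v W X₁ X₂, Split k X v W X₁ X₂ ∧ HasLen A (k - 1) l X₁}

/-- The invariant `r(X) = min { l(X₂) }` over all admissible splittings of `X`. -/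
noncomputable def rInv (A : Submodule F M) (k : ℕ) (X : ExteriorAlgebra F M) : ℕ :=
  sInf {l | ∃ v W X₁ X₂, Split k X v W X₁ X₂ ∧ HasLen A k l X₂}

end Machinery

/-- The wedge product `b i ∧ b j ∧ b k` of three vectors. -/
noncomputable def wedge3 {F : Type*} [Field F] {M : Type*} [AddCommGroup M] [Module F M]
    (b : Fin 7 → M) (i j k : Fin 7) : ExteriorAlgebra F M :=
  ExteriorAlgebra.ι F (b i) * ExteriorAlgebra.ι F (b j) * ExteriorAlgebra.ι F (b k)

/-- The standard `(G₂)_ℂ` three-form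
`φ = E^{127}+E^{347}+E^{567}+E^{135}-E^{146}-E^{236}-E^{245}`, with `0`-based indices. -/
noncomputable def phiStd {F : Type*} [Field F] {M : Type*} [AddCommGroup M] [Module F M]
    (E : Fin 7 → M) : ExteriorAlgebra F M :=
  wedge3 E 0 1 6 + wedge3 E 2 3 6 + wedge3 E 4 5 6 + wedge3 E 0 2 4 -
    wedge3 E 0 3 5 - wedge3 E 1 2 5 - wedge3 E 1 3 4

/-!
Every lower bound comes from one property of `φ`: no nonzero covector `d` contracts it to a
decomposable two-vector. A covector vanishing on the support would contract `φ` to zero, so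
`ρ(φ) = 7`. If `φ` were a sum of `l ≤ 3` decomposables, the factors of `l - 1` of them span at most
six dimensions, and a covector killing these contracts `φ` to the contraction of the one remaining
summand, which is decomposable. For `φ = X₁ ∧ v + X₂`, a covector killing `v` and the factors of
`X₂` contracts `φ` to `x ∧ v` for a vector `x`, while one with kernel `U` contracts it to a multiple
of `X₁`.

In null coordinates `φ` is a multiple of `z₀z₁z₂ + w₀w₁w₂ + (z₀w₀ + z₁w₁ + z₂w₂)f`, and seven
Plücker relations for a contraction of this form by `d` force all coordinates of `d` to vanish.
Splitting off `f` and `z₀` shows that the bounds on `r` and `m` are attained.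
-/

section

open ExteriorAlgebra

variable {F : Type*} [Field F] {M : Type*} [AddCommGroup M] [Module F M]
  {A A' U : Submodule F M} {k l m : ℕ} {X Y : ExteriorAlgebra F M} {d : Dual F M} {v x y z : M}

/-! ### Decomposable multivectors and length -/

theorem dec_zero_iff : Dec A 0 X ↔ X = 1 := by
  simp [Dec]

theorem dec_succ_iff : Dec A (k + 1) X ↔ ∃ x ∈ A, ∃ Y, Dec A k Y ∧ X = ι F x * Y := by
  constructor
  · rintro ⟨v, hv, rfl⟩
    exact ⟨v 0, hv 0, _, ⟨fun i => v i.succ, fun i => hv i.succ, rfl⟩, by simp [List.ofFn_succ]⟩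
  · rintro ⟨x, hx, _, ⟨v, hv, rfl⟩, rfl⟩
    exact ⟨Fin.cons x v, Fin.cases hx hv, by simp [List.ofFn_succ]⟩

theorem dec_ι (hx : x ∈ A) : Dec A 1 (ι F x) :=
  dec_succ_iff.2 ⟨x, hx, 1, dec_zero_iff.2 rfl, (mul_one _).symm⟩

theorem dec_ι_mul (hx : x ∈ A) (hY : Dec A k Y) : Dec A (k + 1) (ι F x * Y) :=
  dec_succ_iff.2 ⟨x, hx, Y, hY, rfl⟩

theorem dec_ι_mul_ι (hx : x ∈ A) (hy : y ∈ A) : Dec A 2 (ι F x * ι F y) :=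
  dec_ι_mul hx (dec_ι hy)

theorem dec_ι_mul_ι_mul_ι (hx : x ∈ A) (hy : y ∈ A) (hz : z ∈ A) :
    Dec A 3 (ι F x * ι F y * ι F z) :=
  mul_assoc (ι F x) _ _ ▸ dec_ι_mul hx (dec_ι_mul_ι hy hz)

theorem dec_two_iff : Dec A 2 X ↔ ∃ x ∈ A, ∃ y ∈ A, X = ι F x * ι F y := by
  simp [dec_succ_iff, dec_zero_iff]

theorem Dec.mono (hA : A ≤ A') (hX : Dec A k X) : Dec A' k X :=
  let ⟨v, hv, h⟩ := hX
  ⟨v, fun i => hA (hv i), h⟩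

theorem Dec.smul (hk : k ≠ 0) (c : F) (hX : Dec A k X) : Dec A k (c • X) := by
  obtain ⟨k, rfl⟩ := Nat.exists_eq_succ_of_ne_zero hk
  obtain ⟨x, hx, Y, hY, rfl⟩ := dec_succ_iff.1 hX
  rw [← smul_mul_assoc, ← map_smul]
  exact dec_ι_mul (A.smul_mem c hx) hY

theorem dec_zero (hk : k ≠ 0) : Dec A k 0 := by
  obtain ⟨k, rfl⟩ := Nat.exists_eq_succ_of_ne_zero hk
  exact ⟨fun _ => 0, fun _ => A.zero_mem, by simp [List.ofFn_succ]⟩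

theorem Dec.memPow (hX : Dec A k X) : memPow A k X := by
  induction k generalizing X with
  | zero =>
    rw [dec_zero_iff.1 hX]
    exact Submodule.one_le.1 (pow_zero _).ge
  | succ k ih =>
    obtain ⟨x, hx, Y, hY, rfl⟩ := dec_succ_iff.1 hX
    rw [_root_.memPow, pow_succ']
    exact Submodule.mul_mem_mul (Submodule.mem_map_of_mem hx) (ih hY)

theorem Dec.lenLE_one (hX : Dec A k X) : LenLE A k 1 X :=
  ⟨fun _ => X, fun _ => hX, by simp⟩

theorem LenLE.add (hX : LenLE A k l X) (hY : LenLE A k m Y) : LenLE A k (l + m) (X + Y) := by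
  obtain ⟨S, hS, rfl⟩ := hX
  obtain ⟨T, hT, rfl⟩ := hY
  exact ⟨Fin.append S T, Fin.addCases (by simpa using hS) (by simpa using hT),
    by simp [Fin.sum_univ_add]⟩

theorem LenLE.smul (hk : k ≠ 0) (c : F) (hX : LenLE A k l X) : LenLE A k l (c • X) := by
  obtain ⟨S, hS, rfl⟩ := hX
  exact ⟨fun i => c • S i, fun i => (hS i).smul hk c, Finset.smul_sum⟩

theorem LenLE.mono (hA : A ≤ A') (hX : LenLE A k l X) : LenLE A' k l X :=
  let ⟨S, hS, h⟩ := hX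
  ⟨S, fun i => (hS i).mono hA, h⟩

theorem LenLE.memPow (hX : LenLE A k l X) : memPow A k X := by
  obtain ⟨S, hS, rfl⟩ := hX
  exact Submodule.sum_mem _ fun i _ => (hS i).memPow

theorem LenLE.exists_dec_sub (hk : k ≠ 0) (hX : LenLE A k l X) :
    ∃ Y, Dec A k Y ∧ LenLE A k (l - 1) (X - Y) := by
  obtain ⟨S, hS, rfl⟩ := hX
  cases l with
  | zero => exact ⟨0, dec_zero hk, S, hS, sub_zero _⟩
  | succ l =>
    exact ⟨S 0, hS 0, fun i => S i.succ, fun i => hS i.succ, by simp [Fin.sum_univ_succ]⟩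

theorem LenLE.dec (hk : k ≠ 0) (hl : l ≤ 1) (hX : LenLE A k l X) : Dec A k X := by
  obtain ⟨Y, hY, S, -, hS⟩ := hX.exists_dec_sub hk
  have : IsEmpty (Fin (l - 1)) := Nat.sub_eq_zero_of_le hl ▸ Fin.isEmpty
  rw [Fintype.sum_empty, sub_eq_zero] at hS
  exact hS ▸ hY

theorem LenLE.exists_finrank_le (hX : LenLE A k l X) :
    ∃ U : Submodule F M, finrank F U ≤ k * l ∧ LenLE U k l X := by
  obtain ⟨S, hS, rfl⟩ := hX
  choose w _ hw using hS
  refine ⟨Submodule.span F (Set.range fun p : Fin k × Fin l => w p.2 p.1), ?_, S,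
    fun i => ⟨w i, fun j => Submodule.subset_span ⟨(j, i), rfl⟩, hw i⟩, rfl⟩
  simpa [Set.finrank] using finrank_range_le_card (R := F) fun p : Fin k × Fin l => w p.2 p.1

/-! ### Contraction -/

/-- The contraction (interior product) `d ⌟ X` of a multivector `X` by a covector `d`. -/
noncomputable def contract (d : Dual F M) : ExteriorAlgebra F M →ₗ[F] ExteriorAlgebra F M :=
  CliffordAlgebra.contractLeft (Q := (0 : QuadraticForm F M)) d

theorem contract_one : contract d (1 : ExteriorAlgebra F M) = 0 :=
  CliffordAlgebra.contractLeft_one (Q := (0 : QuadraticForm F M)) d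

theorem contract_algebraMap (c : F) :
    contract d (algebraMap F (ExteriorAlgebra F M) c) = 0 := by
  rw [Algebra.algebraMap_eq_smul_one, map_smul, contract_one, smul_zero]

theorem contract_ι_mul (d : Dual F M) (x : M) (Y : ExteriorAlgebra F M) :
    contract d (ι F x * Y) = d x • Y - ι F x * contract d Y :=
  CliffordAlgebra.contractLeft_ι_mul d x Y

theorem contract_ι (d : Dual F M) (x : M) :
    contract d (ι F x) = algebraMap F (ExteriorAlgebra F M) (d x) :=
  CliffordAlgebra.contractLeft_ι (Q := (0 : QuadraticForm F M)) d x

theorem contract_mul_of_memPow (d : Dual F M) (hX : memPow U k X) (Y : ExteriorAlgebra F M) :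
    contract d (X * Y) = contract d X * Y + (-1 : F) ^ k • (X * contract d Y) := by
  induction hX using Submodule.pow_induction_on_left' with
  | algebraMap c => simp [← Algebra.smul_def, contract_algebraMap]
  | add X X' _ _ _ hX hX' =>
    simp only [add_mul, map_add, hX, hX', smul_add]
    abel
  | mem_mul m hm k X _ hX =>
    obtain ⟨x, -, rfl⟩ := hm
    simp only [mul_assoc, contract_ι_mul, hX, sub_mul, smul_mul_assoc, mul_add, mul_smul_comm,
      pow_succ, mul_neg_one, neg_smul]
    abel

theorem contract_eq_zero_of_memPow (hU : U ≤ LinearMap.ker d) (hX : memPow U k X) :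
    contract d X = 0 := by
  induction hX using Submodule.pow_induction_on_left' with
  | algebraMap c => exact contract_algebraMap c
  | add X Y _ _ _ hX hY => rw [map_add, hX, hY, add_zero]
  | mem_mul m hm _ X _ hX =>
    obtain ⟨x, hx, rfl⟩ := hm
    rw [contract_ι_mul, hX, show d x = 0 from hU hx, zero_smul, mul_zero, sub_zero]

theorem contract_memPow (d : Dual F M) (hX : memPow U k X) :
    memPow U (k - 1) (contract d X) := by
  induction hX using Submodule.pow_induction_on_left' with
  | algebraMap c => exact contract_algebraMap (d := d) c ▸ Submodule.zero_mem _
  | add X Y _ _ _ hX hY => exact map_add (contract d) X Y ▸ Submodule.add_mem _ hX hY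
  | mem_mul m hm k X hmem hX =>
    obtain ⟨x, hx, rfl⟩ := hm
    rw [contract_ι_mul]
    refine Submodule.sub_mem _ (Submodule.smul_mem _ _ hmem) ?_
    cases k with
    | zero =>
      obtain ⟨c, rfl⟩ := Submodule.mem_one.1 hmem
      rw [contract_algebraMap, mul_zero]
      exact Submodule.zero_mem _
    | succ k =>
      rw [Nat.succ_sub_one, pow_succ']
      exact Submodule.mul_mem_mul (Submodule.mem_map_of_mem hx) hX

theorem contract_mul_ι_of_memPow (hU : U ≤ LinearMap.ker d) (hX : memPow U k X) (v : M) :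
    contract d (X * ι F v) = ((-1) ^ k * d v) • X := by
  rw [contract_mul_of_memPow d hX, contract_eq_zero_of_memPow hU hX, contract_ι, zero_mul,
    zero_add, ← Algebra.commutes, ← Algebra.smul_def, smul_smul]

theorem ι_mul_ι_swap (x y : M) : ι F x * ι F y = -(ι F y * ι F x) :=
  eq_neg_of_add_eq_zero_left (ι_add_mul_swap x y)

theorem ι_mul_ι_mul_ι_rotate (x y z : M) :
    ι F x * ι F y * ι F z = ι F y * ι F z * ι F x := by
  rw [ι_mul_ι_swap x y, neg_mul, mul_assoc, ι_mul_ι_swap x z, mul_neg, neg_neg, mul_assoc]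

theorem Dec.exists_ι_mul_eq (hx : x ∈ A) (hdx : d x ≠ 0) (hY : Dec A k Y) :
    ∃ Z, Dec (A ⊓ LinearMap.ker d) k Z ∧ ι F x * Y = ι F x * Z := by
  induction k generalizing Y with
  | zero => exact ⟨Y, dec_zero_iff.2 (dec_zero_iff.1 hY), rfl⟩
  | succ k ih =>
    obtain ⟨y, hy, Y', hY', rfl⟩ := dec_succ_iff.1 hY
    obtain ⟨Z, hZ, hYZ⟩ := ih hY'
    have swap (T : ExteriorAlgebra F M) : ι F x * (ι F y * T) = -(ι F y * (ι F x * T)) := by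
      rw [← mul_assoc, ι_mul_ι_swap, neg_mul, mul_assoc]
    refine ⟨ι F (y - (d y / d x) • x) * Z, dec_ι_mul ⟨?_, ?_⟩ hZ, ?_⟩
    · exact A.sub_mem hy (A.smul_mem _ hx)
    · simp [hdx]
    · calc ι F x * (ι F y * Y') = ι F x * (ι F y * Z) := by rw [swap, swap, hYZ]
        _ = ι F x * (ι F (y - (d y / d x) • x) * Z) := by
          rw [map_sub, map_smul, sub_mul, mul_sub, smul_mul_assoc, mul_smul_comm, ← mul_assoc _ _ Z,
            ← mul_assoc _ _ Z, ι_sq_zero, zero_mul, smul_zero, sub_zero]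

theorem Dec.exists_contract_eq_smul (d : Dual F M) (hX : Dec A (k + 1) X) :
    ∃ c : F, ∃ Z, Dec A k Z ∧ contract d X = c • Z := by
  induction k generalizing X with
  | zero =>
    obtain ⟨x, -, Y, hY, rfl⟩ := dec_succ_iff.1 hX
    rw [dec_zero_iff.1 hY, contract_ι_mul, contract_one, mul_zero, sub_zero]
    exact ⟨d x, 1, dec_zero_iff.2 rfl, rfl⟩
  | succ k ih =>
    obtain ⟨x, hx, Y, hY, rfl⟩ := dec_succ_iff.1 hX
    by_cases hdx : d x = 0
    · obtain ⟨c, Z, hZ, hYZ⟩ := ih hY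
      refine ⟨-c, ι F x * Z, dec_ι_mul hx hZ, ?_⟩
      rw [contract_ι_mul, hdx, hYZ, zero_smul, zero_sub, mul_smul_comm, neg_smul]
    · obtain ⟨Z, hZ, hYZ⟩ := hY.exists_ι_mul_eq hx hdx
      refine ⟨d x, Z, hZ.mono inf_le_left, ?_⟩
      rw [hYZ, contract_ι_mul, contract_eq_zero_of_memPow inf_le_right hZ.memPow, mul_zero,
        sub_zero]

theorem Dec.contract (hk : k ≠ 0) (d : Dual F M) (hX : Dec A (k + 1) X) :
    Dec A k (contract d X) := by
  obtain ⟨c, Z, hZ, h⟩ := hX.exists_contract_eq_smul d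
  exact h ▸ hZ.smul hk c

/-! ### Multivectors without decomposable contractions -/

/-- No nonzero covector contracts the `(k+1)`-vector `X` to a decomposable `k`-vector. All lower
bounds on the invariants of `X` come from this property. -/
def NoDecContraction (k : ℕ) (X : ExteriorAlgebra F M) : Prop :=
  ∀ d : Dual F M, Dec ⊤ k (contract d X) → d = 0

theorem NoDecContraction.supp_eq_top (hX : NoDecContraction k X) (hk : k ≠ 0) :
    supp m X = ⊤ := by
  refine sInf_eq_top.2 fun U hU => ?_
  by_contra hne
  obtain ⟨d, hd, hUd⟩ := U.exists_le_ker_of_lt_top (lt_top_iff_ne_top.2 hne)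
  refine hd (hX d ?_)
  rw [contract_eq_zero_of_memPow hUd hU]
  exact dec_zero hk

theorem exists_ne_zero_le_ker_of_finrank_lt (hU : finrank F U < finrank F M) :
    ∃ d : Dual F M, d ≠ 0 ∧ U ≤ LinearMap.ker d :=
  U.exists_le_ker_of_lt_top <| lt_top_iff_ne_top.2 fun h => hU.ne (h ▸ finrank_top F M)

theorem NoDecContraction.finrank_le_of_lenLE (hX : NoDecContraction k X) (hk : k ≠ 0)
    (hl : LenLE A (k + 1) l X) : finrank F M ≤ (k + 1) * (l - 1) := by
  by_contra! hlt
  obtain ⟨Y, hY, hXY⟩ := hl.exists_dec_sub k.succ_ne_zero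
  obtain ⟨U, hUl, hU⟩ := hXY.exists_finrank_le
  obtain ⟨d, hd, hUd⟩ := exists_ne_zero_le_ker_of_finrank_lt (hUl.trans_lt hlt)
  refine hd (hX d ?_)
  have hXY : contract d X = contract d Y :=
    sub_eq_zero.1 ((map_sub _ _ _).symm.trans (contract_eq_zero_of_memPow hUd hU.memPow))
  exact hXY ▸ (hY.contract hk d).mono le_top

theorem NoDecContraction.finrank_le_of_lenLE_of_split {X₁ X₂ : ExteriorAlgebra F M}
    (hX : NoDecContraction 2 X) (hS : Split 3 X v U X₁ X₂)
    (hl : LenLE A 3 l X₂) : finrank F M ≤ 3 * l + 1 := by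
  obtain ⟨-, -, -, -, hX₁, -, rfl⟩ := hS
  by_contra! hlt
  have : FiniteDimensional F M := FiniteDimensional.of_finrank_pos (Nat.zero_lt_of_lt hlt)
  obtain ⟨V, hVl, hV⟩ := hl.exists_finrank_le
  have finrank_span : finrank F (Submodule.span F {v}) ≤ 1 := by
    simpa using finrank_span_le_card (R := F) ({v} : Set M)
  have hVv : finrank F ↥(V ⊔ Submodule.span F {v}) < finrank F M :=
    (Submodule.finrank_add_le_finrank_add_finrank _ _).trans_lt <|
      (add_le_add hVl finrank_span).trans_lt hlt
  obtain ⟨d, hd, hVd⟩ := exists_ne_zero_le_ker_of_finrank_lt hVv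
  obtain ⟨hVd, hvd⟩ := sup_le_iff.1 hVd
  have hdv : d v = 0 := hvd (Submodule.mem_span_singleton_self v)
  obtain ⟨x, -, hx⟩ : ∃ x ∈ U, ι F x = contract d X₁ := by
    simpa [memPow] using contract_memPow d hX₁
  refine hd (hX d ?_)
  rw [map_add, contract_eq_zero_of_memPow hVd hV.memPow, contract_mul_of_memPow d hX₁, contract_ι,
    hdv, map_zero, mul_zero, smul_zero, add_zero, add_zero, ← hx]
  exact dec_ι_mul_ι trivial trivial

theorem Split.exists_le_ker {X₁ X₂ : ExteriorAlgebra F M} (hS : Split k X v U X₁ X₂) :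
    ∃ d : Dual F M, d v ≠ 0 ∧ U ≤ LinearMap.ker d := by
  obtain ⟨-, hv, -, hUv, -⟩ := hS
  refine Submodule.exists_le_ker_of_notMem fun hvU => hv ?_
  rw [← Submodule.mem_bot F, ← hUv]
  exact ⟨hvU, Submodule.mem_span_singleton_self v⟩

theorem NoDecContraction.two_le_of_lenLE_of_split {X₁ X₂ : ExteriorAlgebra F M}
    (hX : NoDecContraction k X) (hk : k ≠ 0) (hS : Split (k + 1) X v U X₁ X₂)
    (hl : LenLE A k l X₁) : 2 ≤ l := by
  by_contra! hlt
  obtain ⟨d, hdv, hUd⟩ := hS.exists_le_ker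
  obtain ⟨-, -, -, -, hX₁, hX₂, rfl⟩ := hS
  have hd : d = 0 := by
    refine hX d ?_
    rw [map_add, contract_eq_zero_of_memPow hUd hX₂, contract_mul_ι_of_memPow hUd hX₁, add_zero]
    exact ((hl.dec hk (Nat.le_of_lt_succ hlt)).mono le_top).smul hk _
  exact hdv (by rw [hd, LinearMap.zero_apply])

theorem split_of_apply_eq_one {X₁ X₂ : ExteriorAlgebra F M} (hX : supp k X = ⊤) (hdv : d v = 1)
    (h₁ : memPow (LinearMap.ker d) (k - 1) X₁) (h₂ : memPow (LinearMap.ker d) k X₂)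
    (h : X = X₁ * ι F v + X₂) : Split k X v (LinearMap.ker d) X₁ X₂ := by
  refine ⟨hX ▸ trivial, ?_, ?_, ?_, h₁, h₂, h⟩
  · rintro rfl
    simp at hdv
  · rw [hX, eq_top_iff]
    intro x _
    rw [← sub_add_cancel x (d x • v)]
    exact Submodule.add_mem_sup (by simp [hdv])
      (Submodule.smul_mem _ _ (Submodule.mem_span_singleton_self v))
  · rw [← disjoint_iff, Submodule.disjoint_span_singleton]
    intro hv
    simp [LinearMap.mem_ker.1 hv] at hdv

theorem len_eq_of_forall_le (hl : LenLE A k l X) (hle : ∀ j, LenLE A k j X → l ≤ j) :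
    len A k X = l :=
  IsLeast.csInf_eq ⟨hl, hle⟩

theorem rInv_eq_of_forall_le {X₁ X₂ : ExteriorAlgebra F M} (hS : Split k X v U X₁ X₂)
    (hl : LenLE A k l X₂)
    (hle : ∀ v U X₁ X₂ j, Split k X v U X₁ X₂ → LenLE A k j X₂ → l ≤ j) : rInv A k X = l :=
  IsLeast.csInf_eq
    ⟨⟨v, U, X₁, X₂, hS, hl, fun j hj h => hj.not_ge (hle _ _ _ _ j hS h)⟩,
      fun j ⟨_, _, _, _, hS, h, _⟩ => hle _ _ _ _ j hS h⟩

theorem mInv_eq_of_forall_le {X₁ X₂ : ExteriorAlgebra F M} (hS : Split k X v U X₁ X₂)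
    (hl : LenLE A (k - 1) l X₁)
    (hle : ∀ v U X₁ X₂ j, Split k X v U X₁ X₂ → LenLE A (k - 1) j X₁ → l ≤ j) :
    mInv A k X = l :=
  IsLeast.csInf_eq
    ⟨⟨v, U, X₁, X₂, hS, hl, fun j hj h => hj.not_ge (hle _ _ _ _ j hS h)⟩,
      fun j ⟨_, _, _, _, hS, h, _⟩ => hle _ _ _ _ j hS h⟩

/-! ### The Plücker relations -/

/-- The value `α(p, q)` of the two-vector `α` on two covectors. -/
noncomputable def evalTwo (p q : Dual F M) : ExteriorAlgebra F M →ₗ[F] F :=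
  (algebraMapInv (R := F) (M := M)).toLinearMap ∘ₗ contract q ∘ₗ contract p

theorem evalTwo_ι_mul_ι (p q : Dual F M) (x y : M) :
    evalTwo p q (ι F x * ι F y) = p x * q y - p y * q x := by
  simp [evalTwo, contract_ι_mul, contract_ι, ← Algebra.commutes, ← Algebra.smul_def]

theorem evalTwo_contract_wedge3 (d p q : Dual F M) (B : Fin 7 → M) (i j k : Fin 7) :
    evalTwo p q (contract d (wedge3 B i j k)) =
      d (B i) * (p (B j) * q (B k) - p (B k) * q (B j)) -
      d (B j) * (p (B i) * q (B k) - p (B k) * q (B i)) +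
      d (B k) * (p (B i) * q (B j) - p (B j) * q (B i)) := by
  have h : contract d (wedge3 B i j k) = d (B i) • (ι F (B j) * ι F (B k)) -
      d (B j) • (ι F (B i) * ι F (B k)) + d (B k) • (ι F (B i) * ι F (B j)) := by
    simp only [wedge3, mul_assoc, contract_ι_mul, contract_ι, ← Algebra.commutes,
      ← Algebra.smul_def, mul_sub, mul_smul_comm]
    abel
  simp only [h, map_add, map_sub, map_smul, evalTwo_ι_mul_ι, smul_eq_mul]

theorem Dec.pluecker {α : ExteriorAlgebra F M} (hα : Dec A 2 α) (p q r s : Dual F M) :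
    evalTwo p q α * evalTwo r s α - evalTwo p r α * evalTwo q s α +
      evalTwo p s α * evalTwo q r α = 0 := by
  obtain ⟨x, -, y, -, rfl⟩ := dec_two_iff.1 hα
  simp only [evalTwo_ι_mul_ι]
  ring

/-! ### The split three-form -/

/-- The `G₂`-three-form `z₀z₁z₂ + w₀w₁w₂ + (z₀w₀ + z₁w₁ + z₂w₂)f` in the coordinates
`E = (z₀, z₁, z₂, w₀, w₁, w₂, f)`, which are isotropic up to `f`. -/
noncomputable def splitForm (E : Fin 7 → M) : ExteriorAlgebra F M :=
  wedge3 E 0 1 2 + wedge3 E 3 4 5 + (wedge3 E 0 3 6 + wedge3 E 1 4 6 + wedge3 E 2 5 6)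

theorem noDecContraction_smul_splitForm (E : Basis (Fin 7) F M) {c : F} (hc : c ≠ 0) :
    NoDecContraction 2 (c • splitForm (F := F) E) := by
  intro d hd
  have pluecker (i j k l : Fin 7) :=
    hd.pluecker (E.coord i) (E.coord j) (E.coord k) (E.coord l)
  simp only [splitForm, map_smul, map_add, evalTwo_contract_wedge3, Basis.coord_apply,
    Basis.repr_self] at pluecker
  -- Up to sign and the factor `c²`, the left-hand sides are `d(E k)²` for `k = 0, …, 5` and
  -- `d(E 6)² - d(E 2) d(E 5)`.
  have h₀ : d (E 0) = 0 := by simpa [hc] using pluecker 1 2 3 6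
  have h₁ : d (E 1) = 0 := by simpa [hc] using pluecker 0 2 4 6
  have h₂ : d (E 2) = 0 := by simpa [hc] using pluecker 0 1 5 6
  have h₃ : d (E 3) = 0 := by simpa [hc] using pluecker 0 4 5 6
  have h₄ : d (E 4) = 0 := by simpa [hc] using pluecker 1 3 5 6
  have h₅ : d (E 5) = 0 := by simpa [hc] using pluecker 2 3 4 6
  have h₆ : d (E 6) = 0 := by simpa [hc, h₂, h₅] using pluecker 0 3 1 4
  refine E.ext fun i => ?_
  fin_cases i <;> assumption

-- The cross terms of the second summand cancel the terms with `E 6` in front of the last two.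
theorem splitForm_eq_sum_four (E : Fin 7 → M) :
    splitForm (F := F) E =
      ι F (E 0) * ι F (E 3) * ι F (E 6) + ι F (E 1 + E 5) * ι F (E 4 - E 2) * ι F (E 6) +
        ι F (E 0 + E 6) * ι F (E 1) * ι F (E 2) + ι F (E 3 + E 6) * ι F (E 4) * ι F (E 5) := by
  simp only [splitForm, wedge3, map_add, map_sub, add_mul, mul_sub, sub_mul,
    ι_mul_ι_mul_ι_rotate (E 6), ι_mul_ι_swap (E 5), neg_mul]
  abel

theorem splitForm_eq_mul_ι_zero_add (E : Fin 7 → M) :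
    splitForm (F := F) E =
      (ι F (E 1) * ι F (E 2) + ι F (E 3) * ι F (E 6)) * ι F (E 0) +
        (wedge3 E 3 4 5 + (wedge3 E 1 4 6 + wedge3 E 2 5 6)) := by
  simp only [splitForm, wedge3, add_mul, ι_mul_ι_mul_ι_rotate (E 0)]
  abel

theorem splitForm_eq_mul_ι_six_add (E : Fin 7 → M) :
    splitForm (F := F) E =
      (ι F (E 0) * ι F (E 3) + ι F (E 1) * ι F (E 4) + ι F (E 2) * ι F (E 5)) * ι F (E 6) +
        (wedge3 E 0 1 2 + wedge3 E 3 4 5) := by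
  simp only [splitForm, wedge3, add_mul]
  abel

theorem lenLE_four_splitForm (E : Fin 7 → M) : LenLE ⊤ 3 4 (splitForm (F := F) E) := by
  have dec (x y z : M) : LenLE (⊤ : Submodule F M) 3 1 (ι F x * ι F y * ι F z) :=
    (dec_ι_mul_ι_mul_ι Submodule.mem_top Submodule.mem_top Submodule.mem_top).lenLE_one
  rw [splitForm_eq_sum_four]
  exact (((dec _ _ _).add (dec _ _ _)).add (dec _ _ _)).add (dec _ _ _)

theorem rkInv_smul_splitForm (E : Basis (Fin 7) F M) {c : F} (hc : c ≠ 0) :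
    rkInv (F := F) 3 (c • splitForm (F := F) E) = 7 := by
  rw [rkInv, (noDecContraction_smul_splitForm E hc).supp_eq_top two_ne_zero, finrank_top,
    finrank_eq_card_basis E, Fintype.card_fin]

theorem len_smul_splitForm (E : Basis (Fin 7) F M) {c : F} (hc : c ≠ 0) :
    len ⊤ 3 (c • splitForm (F := F) E) = 4 := by
  refine len_eq_of_forall_le ((lenLE_four_splitForm E).smul three_ne_zero c) fun j hj => ?_
  have := (noDecContraction_smul_splitForm E hc).finrank_le_of_lenLE two_ne_zero hj
  rw [finrank_eq_card_basis E, Fintype.card_fin] at this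
  omega

theorem rInv_smul_splitForm (E : Basis (Fin 7) F M) {c : F} (hc : c ≠ 0) :
    rInv ⊤ 3 (c • splitForm (F := F) E) = 2 := by
  have hE := noDecContraction_smul_splitForm E hc
  have mem_ker {i : Fin 7} (hi : i ≠ 6) : E i ∈ LinearMap.ker (E.coord 6) := by simp [hi]
  have h₁ : LenLE (LinearMap.ker (E.coord 6)) 2 3
      (ι F (E 0) * ι F (E 3) + ι F (E 1) * ι F (E 4) + ι F (E 2) * ι F (E 5)) := by
    refine ((Dec.lenLE_one ?_).add (Dec.lenLE_one ?_)).add (Dec.lenLE_one ?_) <;>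
      exact dec_ι_mul_ι (mem_ker (by decide)) (mem_ker (by decide))
  have h₂ : LenLE (LinearMap.ker (E.coord 6)) 3 2 (wedge3 E 0 1 2 + wedge3 E 3 4 5) := by
    refine (Dec.lenLE_one ?_).add (Dec.lenLE_one ?_) <;>
      exact dec_ι_mul_ι_mul_ι (mem_ker (by decide)) (mem_ker (by decide)) (mem_ker (by decide))
  have hS : Split 3 (c • splitForm (F := F) E) (E 6) (LinearMap.ker (E.coord 6)) (c • _) (c • _) :=
    split_of_apply_eq_one (hE.supp_eq_top two_ne_zero) (by simp) (h₁.smul two_ne_zero c).memPow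
      (h₂.smul three_ne_zero c).memPow <| by
        rw [splitForm_eq_mul_ι_six_add, smul_add, smul_mul_assoc]
  refine rInv_eq_of_forall_le hS ((h₂.smul three_ne_zero c).mono le_top)
    fun v U X₁ X₂ j hS hj => ?_
  have := hE.finrank_le_of_lenLE_of_split hS hj
  rw [finrank_eq_card_basis E, Fintype.card_fin] at this
  omega

theorem mInv_smul_splitForm (E : Basis (Fin 7) F M) {c : F} (hc : c ≠ 0) :
    mInv ⊤ 3 (c • splitForm (F := F) E) = 2 := by
  have hE := noDecContraction_smul_splitForm E hc
  have mem_ker {i : Fin 7} (hi : i ≠ 0) : E i ∈ LinearMap.ker (E.coord 0) := by simp [hi]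
  have dec_wedge3 {i j k : Fin 7} (hi : i ≠ 0) (hj : j ≠ 0) (hk : k ≠ 0) :
      LenLE (LinearMap.ker (E.coord 0)) 3 1 (wedge3 E i j k) :=
    (dec_ι_mul_ι_mul_ι (mem_ker hi) (mem_ker hj) (mem_ker hk)).lenLE_one
  have h₁ : LenLE (LinearMap.ker (E.coord 0)) 2 2
      (ι F (E 1) * ι F (E 2) + ι F (E 3) * ι F (E 6)) := by
    refine (Dec.lenLE_one ?_).add (Dec.lenLE_one ?_) <;>
      exact dec_ι_mul_ι (mem_ker (by decide)) (mem_ker (by decide))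
  have h₂ : LenLE (LinearMap.ker (E.coord 0)) 3 3
      (wedge3 E 3 4 5 + (wedge3 E 1 4 6 + wedge3 E 2 5 6)) :=
    (dec_wedge3 (by decide) (by decide) (by decide)).add <|
      (dec_wedge3 (by decide) (by decide) (by decide)).add
        (dec_wedge3 (by decide) (by decide) (by decide))
  have hS : Split 3 (c • splitForm (F := F) E) (E 0) (LinearMap.ker (E.coord 0)) (c • _) (c • _) :=
    split_of_apply_eq_one (hE.supp_eq_top two_ne_zero) (by simp) (h₁.smul two_ne_zero c).memPow
      (h₂.smul three_ne_zero c).memPow <| by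
        rw [splitForm_eq_mul_ι_zero_add, smul_add, smul_mul_assoc]
  exact mInv_eq_of_forall_le hS ((h₁.smul two_ne_zero c).mono le_top)
    fun v U X₁ X₂ j => hE.two_le_of_lenLE_of_split two_ne_zero

/-! ### The standard three-form -/

/-- The coordinates `E₁ ± i E₂`, `E₃ ± i E₄`, `E₅ ± i E₆`, `i E₇` in which the standard three-form
takes the split shape; `i` stands for a square root of `-1`. -/
def nullCoords (i : F) (E : Fin 7 → M) : Fin 7 → M :=
  ![E 0 + i • E 1, E 2 + i • E 3, E 4 + i • E 5, E 0 - i • E 1, E 2 - i • E 3, E 4 - i • E 5,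
    i • E 6]

theorem ι_add_mul_ι_sub_mul_ι_smul {i : F} (hi : -1 = i * i) (x y z : M) :
    ι F (x + i • y) * ι F (x - i • y) * ι F (i • z) = (2 : F) • (ι F x * ι F y * ι F z) := by
  have hxy : ι F (x + i • y) * ι F (x - i • y) = (-2 * i) • (ι F x * ι F y) := by
    simp only [map_add, map_sub, map_smul, add_mul, mul_sub, smul_mul_assoc, mul_smul_comm,
      ι_sq_zero, ι_mul_ι_swap y x]
    module
  rw [hxy, map_smul, smul_mul_assoc, mul_smul_comm, smul_smul]
  congr 1
  linear_combination 2 * hi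

theorem ι_mul_ι_mul_ι_add_conj {i : F} (hi : -1 = i * i) (x₀ y₀ x₁ y₁ x₂ y₂ : M) :
    ι F (x₀ + i • y₀) * ι F (x₁ + i • y₁) * ι F (x₂ + i • y₂) +
        ι F (x₀ - i • y₀) * ι F (x₁ - i • y₁) * ι F (x₂ - i • y₂) =
      (2 : F) • (ι F x₀ * ι F x₁ * ι F x₂ - ι F x₀ * ι F y₁ * ι F y₂ -
        ι F y₀ * ι F x₁ * ι F y₂ - ι F y₀ * ι F y₁ * ι F x₂) := by
  simp only [map_add, map_sub, map_smul, add_mul, mul_add, sub_mul, mul_sub, smul_mul_assoc,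
    mul_smul_comm]
  match_scalars <;> grind

theorem phiStd_eq_smul_splitForm (h2 : (2 : F) ≠ 0) {i : F} (hi : -1 = i * i) (E : Fin 7 → M) :
    phiStd (F := F) E = (2⁻¹ : F) • splitForm (nullCoords i E) := by
  have hre := ι_mul_ι_mul_ι_add_conj hi (E 0) (E 1) (E 2) (E 3) (E 4) (E 5)
  have hnorm (k l : Fin 7) := ι_add_mul_ι_sub_mul_ι_smul hi (E k) (E l) (E 6)
  rw [eq_inv_smul_iff₀ h2]
  calc (2 : F) • phiStd (F := F) E
      = (2 : F) • (ι F (E 0) * ι F (E 2) * ι F (E 4) - ι F (E 0) * ι F (E 3) * ι F (E 5) -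
            ι F (E 1) * ι F (E 2) * ι F (E 5) - ι F (E 1) * ι F (E 3) * ι F (E 4)) +
          ((2 : F) • (ι F (E 0) * ι F (E 1) * ι F (E 6)) +
            (2 : F) • (ι F (E 2) * ι F (E 3) * ι F (E 6)) +
            (2 : F) • (ι F (E 4) * ι F (E 5) * ι F (E 6))) := by
        simp only [phiStd, wedge3]
        module
    _ = splitForm (nullCoords i E) := by
        rw [← hre, ← hnorm, ← hnorm, ← hnorm]
        rfl

theorem top_le_span_nullCoords (h2 : (2 : F) ≠ 0) {i : F} (hi : -1 = i * i)
    (E : Basis (Fin 7) F M) : ⊤ ≤ Submodule.span F (Set.range (nullCoords i E)) := by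
  by_contra hlt
  obtain ⟨d, hd, hker⟩ := Submodule.exists_le_ker_of_lt_top _ (lt_top_iff_not_top_le.2 hlt)
  have hnull (k : Fin 7) : d (nullCoords i E k) = 0 := hker (Submodule.subset_span ⟨k, rfl⟩)
  have hi₀ : i ≠ 0 := by
    rintro rfl
    simp at hi
  have eq_zero {x y : M} (hadd : d (x + i • y) = 0) (hsub : d (x - i • y) = 0) :
      d x = 0 ∧ d y = 0 := by
    simp only [map_add, map_sub, map_smul, smul_eq_mul] at hadd hsub
    grind
  have h₆ : d (E 6) = 0 := by simpa [hi₀, nullCoords] using hnull 6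
  obtain ⟨h₀, h₁⟩ := eq_zero (hnull 0) (hnull 3)
  obtain ⟨h₂, h₃⟩ := eq_zero (hnull 1) (hnull 4)
  obtain ⟨h₄, h₅⟩ := eq_zero (hnull 2) (hnull 5)
  refine hd (E.ext fun k => ?_)
  fin_cases k <;> assumption

theorem stmt8_general (h2 : (2 : F) ≠ 0) (h : IsSquare (-1 : F)) (E : Basis (Fin 7) F M) :
    rkInv (F := F) 3 (phiStd (F := F) E) = 7 ∧
      len (⊤ : Submodule F M) 3 (phiStd (F := F) E) = 4 ∧
      rInv (⊤ : Submodule F M) 3 (phiStd (F := F) E) = 2 ∧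
      mInv (⊤ : Submodule F M) 3 (phiStd (F := F) E) = 2 := by
  obtain ⟨i, hi⟩ := h
  have hc : (2⁻¹ : F) ≠ 0 := inv_ne_zero h2
  let E' : Basis (Fin 7) F M := basisOfTopLeSpanOfCardEqFinrank (nullCoords i E)
    (top_le_span_nullCoords h2 hi E) (finrank_eq_card_basis E).symm
  have hE' : phiStd (F := F) E = (2⁻¹ : F) • splitForm E' := by
    rw [coe_basisOfTopLeSpanOfCardEqFinrank, phiStd_eq_smul_splitForm h2 hi]
  rw [hE']
  exact ⟨rkInv_smul_splitForm E' hc, len_smul_splitForm E' hc, rInv_smul_splitForm E' hc,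
    mInv_smul_splitForm E' hc⟩

end

/-- Let `W` be a seven-dimensional complex vector space with a basis
`E₁,…,E₇` and dual basis `E¹,…,E⁷`, and let
`φ := E^{127}+E^{347}+E^{567}+E^{135}-E^{146}-E^{236}-E^{245} ∈ Λ³W*`.
Then `(ρ(φ), l(φ), r(φ), m(φ)) = (7,4,2,2)`. -/
theorem stmt8 {W : Type*} [AddCommGroup W] [Module ℂ W] [FiniteDimensional ℂ W]
    (hW : finrank ℂ W = 7) (b : Basis (Fin 7) ℂ W) :
    rkInv (F := ℂ) 3 (phiStd (F := ℂ) (⇑b.dualBasis)) = 7 ∧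
      len (⊤ : Submodule ℂ (Module.Dual ℂ W)) 3 (phiStd (F := ℂ) (⇑b.dualBasis)) = 4 ∧
      rInv (⊤ : Submodule ℂ (Module.Dual ℂ W)) 3 (phiStd (F := ℂ) (⇑b.dualBasis)) = 2 ∧
      mInv (⊤ : Submodule ℂ (Module.Dual ℂ W)) 3 (phiStd (F := ℂ) (⇑b.dualBasis)) = 2 := by
  exact stmt8_general two_ne_zero ⟨Complex.I, Complex.I_mul_I.symm⟩ b.dualBasis
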